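/- Let 𝔤 be a finite dimensional simple Lie algebra over k. Then the universal enveloping algebra of the loop algebra 𝔤 ⊗_k k[t, t⁻¹] (the Lie algebra with underlying vector space 𝔤 ⊗_k k[t,t⁻¹] and bracket [a ⊗ p, b ⊗ q] = [a,b] ⊗ pq) is neither left noetherian nor right noetherian. -/

import Mathlib

/-!
Statement 16: Let 𝔤 be a finite dimensional simple Lie algebra over a field k of
characteristic 0.  Then the universal enveloping algebra of the loop algebra
𝔤 ⊗ₖ k[t,t⁻¹] (with bracket [a⊗p, b⊗q] = [a,b] ⊗ pq) is neither left nor right noetherian.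

The loop algebra is realized as the base change `k[t,t⁻¹] ⊗[k] 𝔤`, whose Mathlib bracket
satisfies `[p ⊗ a, q ⊗ b] = pq ⊗ [a,b]`, viewed as a Lie algebra over `k`.
-/

noncomputable section

open scoped TensorProduct

variable (k 𝔤 : Type*) [Field k] [CharZero k] [LieRing 𝔤] [LieAlgebra k 𝔤]

/-- The loop algebra `𝔤 ⊗ₖ k[t,t⁻¹]`, realized as `k[t,t⁻¹] ⊗[k] 𝔤`. -/
abbrev loopAlgebra := LaurentPolynomial k ⊗[k] 𝔤

/-- The loop algebra is a Lie algebra over `k` (by restriction of scalars from `k[t,t⁻¹]`). -/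
instance loopAlgebra.instLieAlgebra : LieAlgebra k (loopAlgebra k 𝔤) where
  lie_smul c x y := by
    rw [← algebraMap_smul (LaurentPolynomial k) c y,
      ← algebraMap_smul (LaurentPolynomial k) c ⁅x, y⁆]
    exact LieAlgebra.lie_smul _ _ _

/-- A ring is not left noetherian if it carries a sequence `u` such that, for every `n`, some
vector of some module is annihilated by `u 0, …, u (n - 1)` but not by `u n`. -/
theorem not_isNoetherianRing_of_forall_exists_annihilated {R : Type*} [Ring R] (u : ℕ → R)
    {K : Type*} [Field K]
    (h : ∀ n, ∃ (M : Type _) (_ : AddCommGroup M) (_ : Module K M)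
      (φ : R →+* Module.End K M) (v : M), (∀ j < n, φ (u j) v = 0) ∧ φ (u n) v ≠ 0) :
    ¬ IsNoetherianRing R := by
  intro hR
  obtain ⟨n, hn⟩ := monotone_stabilizes_iff_noetherian.mpr hR
    ⟨fun n ↦ Ideal.span (Set.image u (Set.Iio n)),
      fun a b hab ↦ Ideal.span_mono (Set.image_mono (Set.Iio_subset_Iio hab))⟩
  obtain ⟨M, _, _, φ, v, hv, hne⟩ := h n
  have hmem : u n ∈ Ideal.span (Set.image u (Set.Iio n)) := by
    have hspan : Ideal.span (Set.image u (Set.Iio n)) = Ideal.span (Set.image u (Set.Iio (n + 1))) :=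
      hn (n + 1) n.le_succ
    rw [hspan]
    exact Ideal.subset_span ⟨n, Nat.lt_succ_self n, rfl⟩
  refine hne (Submodule.span_induction (p := fun r _ ↦ φ r v = 0) ?_ (by simp) ?_ ?_ hmem)
  · rintro _ ⟨j, hj, rfl⟩
    exact hv j hj
  · intro a b _ _ ha hb
    simp [ha, hb]
  · intro a b _ hb
    simp [hb]

section

attribute [local instance] LieRing.ofAssociativeRing

/-- The principal anti-automorphism of the enveloping algebra, `x ↦ -x` on the Lie algebra. -/
def UniversalEnvelopingAlgebra.antipode (R L : Type*) [CommRing R] [LieRing L] [LieAlgebra R L] :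
    UniversalEnvelopingAlgebra R L →ₐ[R] (UniversalEnvelopingAlgebra R L)ᵐᵒᵖ :=
  UniversalEnvelopingAlgebra.lift R
    { toFun := fun x ↦ MulOpposite.op (-UniversalEnvelopingAlgebra.ι R x)
      map_add' := fun x y ↦ by
        rw [map_add, neg_add, MulOpposite.op_add]
      map_smul' := fun c x ↦ by
        rw [map_smul, ← smul_neg, MulOpposite.op_smul, RingHom.id_apply]
      map_lie' := fun {x y} ↦ by
        apply MulOpposite.unop_injective
        simp [LieRing.of_associative_ring_bracket] }

theorem UniversalEnvelopingAlgebra.antipode_ι (R : Type*) {L : Type*} [CommRing R] [LieRing L]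
    [LieAlgebra R L] (x : L) :
    antipode R L (ι R x) = MulOpposite.op (-ι R x) :=
  lift_ι_apply R _ x

/-- A finite-dimensional simple Lie algebra has an element whose adjoint
action is not nilpotent. -/
theorem LieAlgebra.IsSimple.exists_not_isNilpotent_ad (F L : Type*) [Field F] [LieRing L]
    [LieAlgebra F L] [FiniteDimensional F L] [LieAlgebra.IsSimple F L] :
    ∃ x : L, ¬ IsNilpotent (LieAlgebra.ad F L x) := by
  by_contra! h
  have hnil : LieRing.IsNilpotent L := (LieAlgebra.isNilpotent_iff_forall (R := F)).mpr h
  have hbot : (⊤ : LieIdeal F L) = ⊥ :=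
    LieAlgebra.HasTrivialRadical.eq_bot_of_isSolvable ⊤
  have := LieAlgebra.IsSimple.nontrivial F L
  exact top_ne_bot hbot

/-- A non-nilpotent endomorphism of a finite-dimensional space over an algebraically closed field
has a nonzero eigenvalue. -/
theorem Module.End.exists_hasEigenvector_ne_zero_of_not_isNilpotent {K V : Type*} [Field K]
    [IsAlgClosed K] [AddCommGroup V] [Module K V] [FiniteDimensional K V] {f : Module.End K V}
    (hf : ¬ IsNilpotent f) : ∃ (μ : K) (w : V), μ ≠ 0 ∧ f.HasEigenvector μ w := by
  by_contra! h
  apply hf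
  have hzero : ∀ μ : K, μ ≠ 0 → f.maxGenEigenspace μ = ⊥ := by
    intro μ hμ
    by_contra hne
    have hμf : f.HasEigenvalue μ := HasUnifEigenvalue.lt zero_lt_one (k := ⊤) hne
    obtain ⟨w, hw⟩ := hμf.exists_hasEigenvector
    exact h μ w hμ hw
  have htop : f.maxGenEigenspace 0 = ⊤ := by
    rw [eq_top_iff, ← f.iSup_maxGenEigenspace_eq_top]
    refine iSup_le fun μ ↦ ?_
    by_cases hμ : μ = 0
    · rw [hμ]
    · rw [hzero μ hμ]
      exact bot_le
  rw [maxGenEigenspace_eq_genEigenspace_finrank, genEigenspace_nat, zero_smul, sub_zero,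
    LinearMap.ker_eq_top] at htop
  exact ⟨_, htop⟩

/-- Over a field, a pure tensor of nonzero vectors is nonzero. -/
theorem TensorProduct.tmul_ne_zero_of_ne_zero {K M N : Type*} [Field K] [AddCommGroup M]
    [Module K M] [AddCommGroup N] [Module K N] {m : M} {n : N} (hm : m ≠ 0) (hn : n ≠ 0) :
    m ⊗ₜ[K] n ≠ 0 := by
  obtain ⟨f, hf⟩ := not_forall.mp ((Module.forall_dual_apply_eq_zero_iff K m).not.mpr hm)
  obtain ⟨g, hg⟩ := not_forall.mp ((Module.forall_dual_apply_eq_zero_iff K n).not.mpr hn)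
  intro h
  have hmap := congrArg (TensorProduct.lid K K ∘ TensorProduct.map f g) h
  simp [hf, hg] at hmap

/-- The tensor product of two representations by operators linear over a larger field. -/
def tensorRep {R K L M N : Type*} [CommRing R] [Field K] [Algebra R K] [LieRing L] [LieAlgebra R L]
    [AddCommGroup M] [Module K M] [AddCommGroup N] [Module K N]
    [Module R M] [IsScalarTower R K M] [Module R N] [IsScalarTower R K N]
    (ρ : L →ₗ⁅R⁆ Module.End K M) (σ : L →ₗ⁅R⁆ Module.End K N) :
    L →ₗ⁅R⁆ Module.End K (M ⊗[K] N) where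
  toFun y := LinearMap.rTensor N (ρ y) + LinearMap.lTensor M (σ y)
  map_add' y z := by
    simp [LinearMap.rTensor_add, LinearMap.lTensor_add]
    abel
  map_smul' c y := by
    ext
    simp [TensorProduct.smul_tmul']
  map_lie' {y z} := by
    ext m n
    simp [LieRing.of_associative_ring_bracket]
    abel

theorem tensorRep_apply_tmul {R K L M N : Type*} [CommRing R] [Field K] [Algebra R K] [LieRing L]
    [LieAlgebra R L] [AddCommGroup M] [Module K M] [AddCommGroup N] [Module K N]
    [Module R M] [IsScalarTower R K M] [Module R N] [IsScalarTower R K N]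
    (ρ : L →ₗ⁅R⁆ Module.End K M) (σ : L →ₗ⁅R⁆ Module.End K N) (y : L) (m : M) (n : N) :
    tensorRep ρ σ y (m ⊗ₜ n) = ρ y m ⊗ₜ n + m ⊗ₜ σ y n :=
  rfl

namespace loopAlgebra

universe u v w

/-- Evaluation of Laurent polynomials at a unit. -/
def evalPoint (F : Type*) {K : Type*} [Field F] [Field K] [Algebra F K] (a : Kˣ) :
    LaurentPolynomial F →ₐ[F] K :=
  AddMonoidAlgebra.lift F K ℤ ((Units.coeHom K).comp (zpowersHom Kˣ a))

theorem evalPoint_T (F : Type*) {K : Type*} [Field F] [Field K] [Algebra F K] (a : Kˣ) (n : ℕ) :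
    evalPoint F a (LaurentPolynomial.T n) = (a : K) ^ n := by
  rw [evalPoint, LaurentPolynomial.T, AddMonoidAlgebra.lift_single]
  simp

variable {F : Type u} {L : Type v} {K : Type w} [Field F] [LieRing L] [LieAlgebra F L]
  [Field K] [Algebra F K]

/-- The representation of the loop algebra on the base change of the adjoint representation,
through evaluation of the loop parameter. -/
def evalRep (φ : LaurentPolynomial F →ₐ[F] K) :
    loopAlgebra F L →ₗ⁅F⁆ Module.End K (K ⊗[F] L) where
  toFun y := LieAlgebra.ad K (K ⊗[F] L) (LieAlgebra.ExtendScalars.map φ LieHom.id y)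
  map_add' y z := by rw [map_add, map_add]
  map_smul' c y := by
    rw [map_smul, ← algebraMap_smul K c (LieAlgebra.ExtendScalars.map φ LieHom.id y), map_smul,
      algebraMap_smul, RingHom.id_apply]
  map_lie' {y z} := by
    rw [LieHom.map_lie, LieHom.map_lie]

theorem evalRep_tmul_apply (φ : LaurentPolynomial F →ₐ[F] K) (p : LaurentPolynomial F) (x : L)
    (w : K ⊗[F] L) :
    evalRep φ (p ⊗ₜ x) w = φ p • LieAlgebra.ad K (K ⊗[F] L) (1 ⊗ₜ x) w := by
  have h : φ p ⊗ₜ[F] x = φ p • (1 : K) ⊗ₜ[F] x := by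
    rw [TensorProduct.smul_tmul', smul_eq_mul, mul_one]
  change LieAlgebra.ad K (K ⊗[F] L) (φ p ⊗ₜ[F] x) w = _
  rw [h, map_smul, LinearMap.smul_apply]

/-- Tensoring evaluation representations at the points `a i` for `i < m` yields a vector on which
every `x tʲ` acts by `μ` times the `j`-th power sum of the points. -/
theorem exists_rep_powerSum {x : L} {μ : K} {w : K ⊗[F] L}
    (hw : (LieAlgebra.ad K (K ⊗[F] L) (1 ⊗ₜ x)).HasEigenvector μ w) (a : ℕ → Kˣ)
    (m : ℕ) :
    ∃ (M : Type (max w v)) (_ : AddCommGroup M) (_ : Module K M) (_ : Module F M)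
      (_ : IsScalarTower F K M) (ρ : loopAlgebra F L →ₗ⁅F⁆ Module.End K M) (v : M), v ≠ 0 ∧
      ∀ j : ℕ, ρ (LaurentPolynomial.T j ⊗ₜ x) v =
        (μ * ∑ i ∈ Finset.range m, (a i : K) ^ j) • v := by
  induction m with
  | zero => exact ⟨K ⊗[F] L, inferInstance, inferInstance, inferInstance, inferInstance, 0, w, hw.2,
      fun j ↦ by simp⟩
  | succ m ih =>
    obtain ⟨M, _, _, _, _, ρ, v, hv, h⟩ := ih
    refine ⟨(K ⊗[F] L) ⊗[K] M, inferInstance, inferInstance, inferInstance, inferInstance,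
      tensorRep (evalRep (evalPoint F (a m))) ρ, w ⊗ₜ v, ?_, fun j ↦ ?_⟩
    · exact TensorProduct.tmul_ne_zero_of_ne_zero hw.2 hv
    · rw [tensorRep_apply_tmul, h, evalRep_tmul_apply, evalPoint_T, hw.apply_eq_smul,
        TensorProduct.tmul_smul, smul_smul, ← TensorProduct.smul_tmul', ← add_smul,
        Finset.sum_range_succ]
      congr 1
      ring

/-- For each `n` some vector of a representation of the loop algebra is annihilated by
`x t, …, x tⁿ`, but not by `x tⁿ⁺¹`. -/
theorem exists_rep_annihilated [CharZero F] {x : L} {μ : AlgebraicClosure F} (hμ : μ ≠ 0)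
    {w : AlgebraicClosure F ⊗[F] L}
    (hw : (LieAlgebra.ad (AlgebraicClosure F) (AlgebraicClosure F ⊗[F] L)
      (1 ⊗ₜ x)).HasEigenvector μ w) (n : ℕ) :
    ∃ (M : Type (max u v)) (_ : AddCommGroup M) (_ : Module (AlgebraicClosure F) M)
      (φ : UniversalEnvelopingAlgebra F (loopAlgebra F L) →+* Module.End (AlgebraicClosure F) M)
      (v : M),
      (∀ j < n, φ (UniversalEnvelopingAlgebra.ι F (LaurentPolynomial.T ↑(j + 1) ⊗ₜ x)) v = 0) ∧
      φ (UniversalEnvelopingAlgebra.ι F (LaurentPolynomial.T ↑(n + 1) ⊗ₜ x)) v ≠ 0 := by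
  obtain ⟨ζ, hζ⟩ := HasEnoughRootsOfUnity.exists_primitiveRoot (AlgebraicClosure F) (n + 1)
  obtain ⟨M, _, _, _, _, ρ, v, hv, h⟩ := exists_rep_powerSum hw
    (fun i ↦ (hζ.isUnit n.succ_ne_zero).unit ^ i) (n + 1)
  have hsum : ∀ j : ℕ, ∑ i ∈ Finset.range (n + 1),
      (((hζ.isUnit n.succ_ne_zero).unit ^ i : (AlgebraicClosure F)ˣ) : AlgebraicClosure F) ^ j =
      ∑ i ∈ Finset.range (n + 1), (ζ ^ j) ^ i := fun j ↦
    Finset.sum_congr rfl fun i _ ↦ by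
      rw [Units.val_pow_eq_pow_val, IsUnit.unit_spec, pow_right_comm]
  refine ⟨M, inferInstance, inferInstance, (UniversalEnvelopingAlgebra.lift F ρ).toRingHom, v,
    fun j hj ↦ ?_, ?_⟩
  · have hzero : ∑ i ∈ Finset.range (n + 1), (ζ ^ (j + 1)) ^ i = 0 := by
      have hne : ζ ^ (j + 1) - 1 ≠ 0 :=
        sub_ne_zero.mpr (hζ.pow_ne_one_of_pos_of_lt j.succ_ne_zero (by omega))
      refine (mul_eq_zero.mp ?_).resolve_right hne
      rw [geom_sum_mul, ← pow_mul, mul_comm, pow_mul, hζ.pow_eq_one, one_pow, sub_self]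
    change UniversalEnvelopingAlgebra.lift F ρ _ v = 0
    rw [UniversalEnvelopingAlgebra.lift_ι_apply, h, hsum, hzero, mul_zero, zero_smul]
  · change UniversalEnvelopingAlgebra.lift F ρ _ v ≠ 0
    rw [UniversalEnvelopingAlgebra.lift_ι_apply, h, hsum, hζ.pow_eq_one]
    simpa [hv, hμ] using Nat.cast_add_one_ne_zero n

end loopAlgebra

end

theorem enveloping_loopAlgebra_not_noetherian
    [FiniteDimensional k 𝔤] [LieAlgebra.IsSimple k 𝔤] :
    ¬ IsNoetherianRing (UniversalEnvelopingAlgebra k (loopAlgebra k 𝔤)) ∧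
      ¬ IsNoetherianRing (UniversalEnvelopingAlgebra k (loopAlgebra k 𝔤))ᵐᵒᵖ := by
  obtain ⟨x, hx⟩ := LieAlgebra.IsSimple.exists_not_isNilpotent_ad k 𝔤
  have hxK : ¬ IsNilpotent
      (LieAlgebra.ad (AlgebraicClosure k) (AlgebraicClosure k ⊗[k] 𝔤) (1 ⊗ₜ x)) := by
    rw [LieAlgebra.ad, LieModule.toEnd_baseChange]
    have hinj : Function.Injective (Module.End.baseChangeHom k (AlgebraicClosure k) 𝔤) :=
      LinearMap.baseChangeHom_injective k 𝔤 (AlgebraicClosure k)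
    exact fun h ↦ hx ((IsNilpotent.map_iff hinj).mp h)
  obtain ⟨μ, w, hμ, hw⟩ := Module.End.exists_hasEigenvector_ne_zero_of_not_isNilpotent hxK
  refine ⟨not_isNoetherianRing_of_forall_exists_annihilated
    (fun j ↦ UniversalEnvelopingAlgebra.ι k (LaurentPolynomial.T ↑(j + 1) ⊗ₜ x))
    (loopAlgebra.exists_rep_annihilated hμ hw),
    not_isNoetherianRing_of_forall_exists_annihilated (K := AlgebraicClosure k)
      (fun j ↦ MulOpposite.op
        (UniversalEnvelopingAlgebra.ι k (LaurentPolynomial.T ↑(j + 1) ⊗ₜ x)))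
      fun n ↦ ?_⟩
  obtain ⟨M, _, _, φ, v, hv, hne⟩ := loopAlgebra.exists_rep_annihilated hμ hw n
  have happ : ∀ y : loopAlgebra k 𝔤, (φ.comp (AlgHom.opComm (UniversalEnvelopingAlgebra.antipode k
      (loopAlgebra k 𝔤))).toRingHom) (MulOpposite.op (UniversalEnvelopingAlgebra.ι k y)) v =
      -φ (UniversalEnvelopingAlgebra.ι k y) v := by
    intro y
    change φ (MulOpposite.unop (UniversalEnvelopingAlgebra.antipode k _
      (UniversalEnvelopingAlgebra.ι k y))) v = _
    rw [UniversalEnvelopingAlgebra.antipode_ι, MulOpposite.unop_op, map_neg, LinearMap.neg_apply]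
  exact ⟨M, inferInstance, inferInstance, _, v, fun j hj ↦ by rw [happ, hv j hj, neg_zero],
    (happ _).trans_ne (neg_ne_zero.mpr hne)⟩

end
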